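/- arXiv:2605.11350 — 4 statements merged into one kernel-verified Lean document; each statement's English description precedes it below -/
import Mathlib

section
/- Let x_1,…,x_N and y_1,…,y_N be 2N nonnegative real numbers with x_i ≥ y_i for all i, and suppose Σ_{m=1}^N ∏_{i=1}^m x_i > 0 and Σ_{m=1}^N ∏_{i=1}^m y_i > 0. Then for every k ∈ {1,…,N}: (Σ_{m=1}^k ∏_{i=1}^m x_i) / (Σ_{m=1}^N ∏_{i=1}^m x_i) ≤ (Σ_{m=1}^k ∏_{i=1}^m y_i) / (Σ_{m=1}^N ∏_{i=1}^m y_i). -/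
/-!
Write `P m`, `Q m` for the products of the first `m` terms of `x`, `y`. For `j ≤ m` the product
`P m` arises from `P j` by multiplying with further terms `x i ≥ y i`, so the ratio `P m / Q m` is
nondecreasing in `m`; since the products may vanish, this is used in the form
`P j * Q m ≤ Q j * P m`. After clearing denominators the claim is
`(∑ j ≤ k, P j) * (∑ m ≤ N, Q m) ≤ (∑ j ≤ k, Q j) * (∑ m ≤ N, P m)`. The terms with `m ≤ k`
contribute equally to both sides, and those with `j ≤ k < m` are compared one by one.
-/

section OrderedSemiring

variable {ι R : Type*} [CommSemiring R] [PartialOrder R] {s t : Finset ι}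

lemma prod_mul_prod_le_prod_mul_prod_of_subset [IsOrderedRing R] {x y : ι → R}
    (hst : s ⊆ t) (hy : ∀ i ∈ t, 0 ≤ y i) (hyx : ∀ i ∈ t, y i ≤ x i) :
    (∏ i ∈ s, x i) * ∏ i ∈ t, y i ≤ (∏ i ∈ s, y i) * ∏ i ∈ t, x i := by
  classical
  have hx : ∀ i ∈ t, 0 ≤ x i := fun i hi => (hy i hi).trans (hyx i hi)
  have hsdiff : ∏ i ∈ t \ s, y i ≤ ∏ i ∈ t \ s, x i :=
    Finset.prod_le_prod (fun i hi => hy i (Finset.sdiff_subset hi))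
      fun i hi => hyx i (Finset.sdiff_subset hi)
  have hnonneg : 0 ≤ (∏ i ∈ s, x i) * ∏ i ∈ s, y i :=
    mul_nonneg (Finset.prod_nonneg fun i hi => hx i (hst hi))
      (Finset.prod_nonneg fun i hi => hy i (hst hi))
  calc (∏ i ∈ s, x i) * ∏ i ∈ t, y i
      = ((∏ i ∈ s, x i) * ∏ i ∈ s, y i) * ∏ i ∈ t \ s, y i := by
        rw [← Finset.prod_sdiff hst]; ring
    _ ≤ ((∏ i ∈ s, x i) * ∏ i ∈ s, y i) * ∏ i ∈ t \ s, x i :=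
        mul_le_mul_of_nonneg_left hsdiff hnonneg
    _ = (∏ i ∈ s, y i) * ∏ i ∈ t, x i := by
        rw [← Finset.prod_sdiff hst]; ring

lemma sum_mul_sum_le_sum_mul_sum_of_subset [DecidableEq ι] [IsOrderedAddMonoid R] {p q : ι → R}
    (hst : s ⊆ t) (hpq : ∀ j ∈ s, ∀ m ∈ t \ s, p j * q m ≤ q j * p m) :
    (∑ j ∈ s, p j) * ∑ m ∈ t, q m ≤ (∑ j ∈ s, q j) * ∑ m ∈ t, p m := by
  have hsdiff : (∑ j ∈ s, p j) * ∑ m ∈ t \ s, q m ≤ (∑ j ∈ s, q j) * ∑ m ∈ t \ s, p m := by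
    simp only [Finset.sum_mul_sum]
    exact Finset.sum_le_sum fun j hj => Finset.sum_le_sum fun m hm => hpq j hj m hm
  calc (∑ j ∈ s, p j) * ∑ m ∈ t, q m
      = (∑ j ∈ s, p j) * ∑ m ∈ t \ s, q m + (∑ j ∈ s, q j) * ∑ m ∈ s, p m := by
        rw [← Finset.sum_sdiff hst]; ring
    _ ≤ (∑ j ∈ s, q j) * ∑ m ∈ t \ s, p m + (∑ j ∈ s, q j) * ∑ m ∈ s, p m := by
        gcongr
    _ = (∑ j ∈ s, q j) * ∑ m ∈ t, p m := by
        rw [← Finset.sum_sdiff hst, mul_add]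

end OrderedSemiring

theorem stmt_9_general {K : Type*} [Field K] [LinearOrder K] [IsStrictOrderedRing K]
    {N k : ℕ} {x y : ℕ → K}
    (hy : ∀ i ∈ Finset.Icc 1 N, 0 ≤ y i) (hyx : ∀ i ∈ Finset.Icc 1 N, y i ≤ x i)
    (hY : 0 < ∑ m ∈ Finset.Icc 1 N, ∏ i ∈ Finset.Icc 1 m, y i) (hkN : k ≤ N) :
    (∑ m ∈ Finset.Icc 1 k, ∏ i ∈ Finset.Icc 1 m, x i) /
        (∑ m ∈ Finset.Icc 1 N, ∏ i ∈ Finset.Icc 1 m, x i) ≤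
      (∑ m ∈ Finset.Icc 1 k, ∏ i ∈ Finset.Icc 1 m, y i) /
        (∑ m ∈ Finset.Icc 1 N, ∏ i ∈ Finset.Icc 1 m, y i) := by
  have hsub {m : ℕ} (hm : m ∈ Finset.Icc 1 N) : Finset.Icc 1 m ⊆ Finset.Icc 1 N :=
    Finset.Icc_subset_Icc_right (Finset.mem_Icc.mp hm).2
  have hX : 0 < ∑ m ∈ Finset.Icc 1 N, ∏ i ∈ Finset.Icc 1 m, x i :=
    hY.trans_le <| Finset.sum_le_sum fun m hm =>
      Finset.prod_le_prod (fun i hi => hy i (hsub hm hi)) fun i hi => hyx i (hsub hm hi)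
  rw [div_le_div_iff₀ hX hY]
  refine sum_mul_sum_le_sum_mul_sum_of_subset (Finset.Icc_subset_Icc_right hkN) fun j hj m hm => ?_
  obtain ⟨hmN, hmk⟩ := Finset.mem_sdiff.mp hm
  have hjm : j ≤ m := by
    simp only [Finset.mem_Icc] at hj hmN hmk
    omega
  exact prod_mul_prod_le_prod_mul_prod_of_subset (Finset.Icc_subset_Icc_right hjm)
    (fun i hi => hy i (hsub hmN hi)) fun i hi => hyx i (hsub hmN hi)

/-- **Lemma 3 (exchange-of-summation inequality).**
Let `x_1,…,x_N` and `y_1,…,y_N` be nonnegative reals with `x_i ≥ y_i` for all `i`, and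
suppose both `Σ_{m=1}^N ∏_{i=1}^m x_i` and `Σ_{m=1}^N ∏_{i=1}^m y_i` are strictly positive.
Then for every `k ∈ {1,…,N}`:
`(Σ_{m=1}^k ∏_{i=1}^m x_i)/(Σ_{m=1}^N ∏_{i=1}^m x_i)
  ≤ (Σ_{m=1}^k ∏_{i=1}^m y_i)/(Σ_{m=1}^N ∏_{i=1}^m y_i)`. -/
theorem stmt_9
    (N : ℕ) (x y : ℕ → ℝ)
    (hx_nonneg : ∀ i, 1 ≤ i → i ≤ N → 0 ≤ x i)
    (hy_nonneg : ∀ i, 1 ≤ i → i ≤ N → 0 ≤ y i)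
    (hxy : ∀ i, 1 ≤ i → i ≤ N → y i ≤ x i)
    (hX : 0 < ∑ m ∈ Finset.Icc 1 N, ∏ i ∈ Finset.Icc 1 m, x i)
    (hY : 0 < ∑ m ∈ Finset.Icc 1 N, ∏ i ∈ Finset.Icc 1 m, y i) :
    ∀ k, 1 ≤ k → k ≤ N →
      (∑ m ∈ Finset.Icc 1 k, ∏ i ∈ Finset.Icc 1 m, x i) /
          (∑ m ∈ Finset.Icc 1 N, ∏ i ∈ Finset.Icc 1 m, x i) ≤
        (∑ m ∈ Finset.Icc 1 k, ∏ i ∈ Finset.Icc 1 m, y i) /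
          (∑ m ∈ Finset.Icc 1 N, ∏ i ∈ Finset.Icc 1 m, y i) := by
  simp only [← and_imp, ← Finset.mem_Icc] at hy_nonneg hxy
  exact fun k _ hkN => stmt_9_general hy_nonneg hxy hY hkN
end

section
/- Fix m ∈ {1,…,N−1} and a decay rate μ > 0. The function h(a) = (Σ_{k=1}^m A'_{k,m}(a)/μ^{k−1}) / (Σ_{k=1}^m A_{k,m}(a)/μ^{k−1} + Σ_{k=m+1}^N B_{k,m}/μ^{k−1}) is increasing in a on the interval (x⋆ − s_{m+1}, x⋆ − s_m], where A_{k,m}(a) = 1/∏_{i=k}^m λ(x⋆ − s_i − a) for k ∈ {1,…,m} and B_{k,m} = λ(0)^{k−m−1} for k ∈ {m+1,…,N}. -/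
/-!
The numerator of `h` is the derivative of its denominator `D`, so `h = (log D)'` and it suffices
that `log D` is strictly convex. A strictly increasing concave `λ` is strictly log-concave, hence
each `A_{k,m}`, a product of factors `1 / λ(x⋆ - s_i - a)`, is strictly log-convex in `a`; and by
Hölder's inequality log-convexity survives the addition of the `A_{k,m} / μ^(k-1)` and of the
constant coming from the `B_{k,m}`.
-/

open Set Filter

/-- `A_{k,m}(a) = 1 / ∏_{i=k}^m λ(x⋆ − s_i − a)`. -/
noncomputable def Afun (lam : ℝ → ℝ) (xstar : ℝ) (s : ℕ → ℝ) (k m : ℕ) (a : ℝ) : ℝ :=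
  (∏ i ∈ Finset.Icc k m, lam (xstar - s i - a))⁻¹

theorem strictConcaveOn_comp_affineMap {𝕜 E F β : Type*} [Field 𝕜] [LinearOrder 𝕜]
    [AddCommGroup E] [AddCommGroup F] [Module 𝕜 E] [Module 𝕜 F]
    [AddCommMonoid β] [PartialOrder β] [SMul 𝕜 β] {T : Set F} {f : F → β}
    (hf : StrictConcaveOn 𝕜 T f) (g : E →ᵃ[𝕜] F) (hg : Function.Injective g) :
    StrictConcaveOn 𝕜 (g ⁻¹' T) (f ∘ g) := by
  refine ⟨hf.1.affine_preimage g, fun x hx y hy hxy a b ha hb hab => ?_⟩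
  rw [Function.comp_apply, Function.comp_apply, Function.comp_apply, Convex.combo_affine_apply hab]
  exact hf.2 hx hy (hg.ne hxy) ha hb hab

theorem strictConcaveOn_sum {𝕜 E β ι : Type*} [Semiring 𝕜] [PartialOrder 𝕜]
    [AddCommMonoid E] [SMul 𝕜 E]
    [AddCommMonoid β] [PartialOrder β] [IsOrderedCancelAddMonoid β] [DistribMulAction 𝕜 β]
    {S : Set E} {K : Finset ι} (hK : K.Nonempty) {f : ι → E → β}
    (hf : ∀ k ∈ K, StrictConcaveOn 𝕜 S (f k)) :
    StrictConcaveOn 𝕜 S fun x => ∑ k ∈ K, f k x := by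
  induction hK using Finset.Nonempty.cons_induction with
  | singleton k => simpa only [Finset.sum_singleton] using hf k (Finset.mem_singleton_self k)
  | cons k K hk _ ih =>
    simp only [Finset.sum_cons]
    exact (hf k (Finset.mem_cons_self k K)).add
      (ih fun l hl => hf l (Finset.mem_cons_of_mem hl))

theorem exp_mul_log_add_mul_log_le {a b u v p q : ℝ} (ha : 0 ≤ a) (hb : 0 ≤ b) (hab : a + b = 1)
    (hu : 0 < u) (hv : 0 < v) (hp : 0 < p) (hq : 0 < q) :
    Real.exp (a * Real.log u + b * Real.log v) ≤
      (a * (u / p) + b * (v / q)) * Real.exp (a * Real.log p + b * Real.log q) := by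
  have hamgm : Real.exp (a * Real.log (u / p) + b * Real.log (v / q)) ≤
      a * (u / p) + b * (v / q) := by
    simpa only [smul_eq_mul, Real.exp_log (div_pos hu hp), Real.exp_log (div_pos hv hq)] using
      convexOn_exp.2 (mem_univ (Real.log (u / p))) (mem_univ (Real.log (v / q))) ha hb hab
  calc Real.exp (a * Real.log u + b * Real.log v)
      = Real.exp (a * Real.log (u / p) + b * Real.log (v / q)) *
          Real.exp (a * Real.log p + b * Real.log q) := by
        rw [← Real.exp_add, Real.log_div hu.ne' hp.ne', Real.log_div hv.ne' hq.ne']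
        ring_nf
    _ ≤ _ := mul_le_mul_of_nonneg_right hamgm (Real.exp_pos _).le

section LogConvexity

variable {E : Type*} [AddCommMonoid E] [Module ℝ E] {S : Set E}

theorem strictConcaveOn_log_of_concaveOn_of_injOn {f : E → ℝ} (hf : ConcaveOn ℝ S f)
    (hinj : InjOn f S) (hpos : ∀ x ∈ S, 0 < f x) :
    StrictConcaveOn ℝ S fun x => Real.log (f x) := by
  refine ⟨hf.1, fun x hx y hy hxy a b ha hb hab => ?_⟩
  have hcombo : 0 < a • f x + b • f y :=
    add_pos (smul_pos ha (hpos x hx)) (smul_pos hb (hpos y hy))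
  calc a • Real.log (f x) + b • Real.log (f y)
      < Real.log (a • f x + b • f y) :=
        strictConcaveOn_log_Ioi.2 (hpos x hx) (hpos y hy) (hinj.ne hx hy hxy) ha hb hab
    _ ≤ Real.log (f (a • x + b • y)) :=
        Real.log_le_log hcombo (hf.2 hx hy ha.le hb.le hab)

theorem strictConvexOn_log_div_const {f : E → ℝ} {c : ℝ}
    (hf : StrictConvexOn ℝ S fun x => Real.log (f x)) (hne : ∀ x ∈ S, f x ≠ 0) (hc : c ≠ 0) :
    StrictConvexOn ℝ S fun x => Real.log (f x / c) :=
  (hf.add_const (-Real.log c)).congr fun x hx => by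
    rw [Pi.add_apply, Real.log_div (hne x hx) hc, sub_eq_add_neg]

/-- Hölder's inequality for two summands, with strictness inherited from `f`. -/
theorem strictConvexOn_log_add {f g : E → ℝ} (hf_pos : ∀ x ∈ S, 0 < f x)
    (hg_pos : ∀ x ∈ S, 0 < g x) (hf : StrictConvexOn ℝ S fun x => Real.log (f x))
    (hg : ConvexOn ℝ S fun x => Real.log (g x)) :
    StrictConvexOn ℝ S fun x => Real.log (f x + g x) := by
  refine ⟨hf.1, fun x hx y hy hxy a b ha hb hab => ?_⟩
  have hz : a • x + b • y ∈ S := hf.1 hx hy ha.le hb.le hab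
  have hDx : 0 < f x + g x := add_pos (hf_pos x hx) (hg_pos x hx)
  have hDy : 0 < f y + g y := add_pos (hf_pos y hy) (hg_pos y hy)
  have hfz : f (a • x + b • y) < Real.exp (a * Real.log (f x) + b * Real.log (f y)) :=
    (Real.log_lt_iff_lt_exp (hf_pos _ hz)).1 (hf.2 hx hy hxy ha hb hab)
  have hgz : g (a • x + b • y) ≤ Real.exp (a * Real.log (g x) + b * Real.log (g y)) :=
    (Real.log_le_iff_le_exp (hg_pos _ hz)).1 (hg.2 hx hy ha.le hb.le hab)
  refine (Real.log_lt_iff_lt_exp (add_pos (hf_pos _ hz) (hg_pos _ hz))).2 ?_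
  simp only [smul_eq_mul]
  set M := Real.exp (a * Real.log (f x + g x) + b * Real.log (f y + g y))
  calc f (a • x + b • y) + g (a • x + b • y)
      < (a * (f x / (f x + g x)) + b * (f y / (f y + g y))) * M +
          (a * (g x / (f x + g x)) + b * (g y / (f y + g y))) * M :=
        add_lt_add_of_lt_of_le
          (hfz.trans_le
            (exp_mul_log_add_mul_log_le ha.le hb.le hab (hf_pos x hx) (hf_pos y hy) hDx hDy))
          (hgz.trans
            (exp_mul_log_add_mul_log_le ha.le hb.le hab (hg_pos x hx) (hg_pos y hy) hDx hDy))
    _ = (a + b) * M := by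
        field_simp
        ring
    _ = M := by rw [hab, one_mul]

theorem strictConvexOn_log_sum {ι : Type*} {K : Finset ι} (hK : K.Nonempty) {f : ι → E → ℝ}
    (hpos : ∀ k ∈ K, ∀ x ∈ S, 0 < f k x)
    (hf : ∀ k ∈ K, StrictConvexOn ℝ S fun x => Real.log (f k x)) :
    StrictConvexOn ℝ S fun x => Real.log (∑ k ∈ K, f k x) := by
  induction hK using Finset.Nonempty.cons_induction with
  | singleton k => simpa only [Finset.sum_singleton] using hf k (Finset.mem_singleton_self k)
  | cons k K hk hK ih =>
    rw [Finset.forall_mem_cons] at hpos hf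
    simp only [Finset.sum_cons]
    exact strictConvexOn_log_add hpos.1
      (fun x hx => Finset.sum_pos (fun l hl => hpos.2 l hl x hx) hK) hf.1 (ih hpos.2 hf.2).convexOn

theorem strictConvexOn_log_add_const {f : E → ℝ} {C : ℝ} (hpos : ∀ x ∈ S, 0 < f x) (hC : 0 ≤ C)
    (hf : StrictConvexOn ℝ S fun x => Real.log (f x)) :
    StrictConvexOn ℝ S fun x => Real.log (f x + C) := by
  rcases hC.eq_or_lt with rfl | hC
  · simpa only [add_zero] using hf
  · exact strictConvexOn_log_add hpos (fun _ _ => hC) hf (convexOn_const _ hf.1)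

end LogConvexity

theorem strictMonoOn_logDeriv {S : Set ℝ} {f : ℝ → ℝ}
    (hf : StrictConvexOn ℝ S fun x => Real.log (f x)) (hne : ∀ x ∈ S, f x ≠ 0)
    (hdiff : ∀ x ∈ S, DifferentiableAt ℝ f x) : StrictMonoOn (logDeriv f) S :=
  (hf.strictMonoOn_deriv fun x hx => (hdiff x hx).log (hne x hx)).congr fun x hx =>
    deriv.log (hdiff x hx) (hne x hx)

theorem strictMonoOn_sum_deriv_div_sum_add_const {ι : Type*} {K : Finset ι} (hK : K.Nonempty)
    {S : Set ℝ} {f : ι → ℝ → ℝ} {w : ι → ℝ} {C : ℝ} (hw : ∀ k ∈ K, 0 < w k) (hC : 0 ≤ C)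
    (hpos : ∀ k ∈ K, ∀ x ∈ S, 0 < f k x) (hdiff : ∀ k ∈ K, ∀ x ∈ S, DifferentiableAt ℝ (f k) x)
    (hf : ∀ k ∈ K, StrictConvexOn ℝ S fun x => Real.log (f k x)) :
    StrictMonoOn
      (fun x => (∑ k ∈ K, deriv (f k) x / w k) / ((∑ k ∈ K, f k x / w k) + C)) S := by
  have hterm_pos : ∀ k ∈ K, ∀ x ∈ S, 0 < f k x / w k := fun k hk x hx =>
    div_pos (hpos k hk x hx) (hw k hk)
  have hsum_pos : ∀ x ∈ S, 0 < ∑ k ∈ K, f k x / w k := fun x hx =>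
    Finset.sum_pos (fun k hk => hterm_pos k hk x hx) hK
  have hterm_diff : ∀ x ∈ S, ∀ k ∈ K, DifferentiableAt ℝ (fun y => f k y / w k) x :=
    fun x hx k hk => (hdiff k hk x hx).div_const (w k)
  have hlog : StrictConvexOn ℝ S fun x => Real.log ((∑ k ∈ K, f k x / w k) + C) :=
    strictConvexOn_log_add_const hsum_pos hC <| strictConvexOn_log_sum hK hterm_pos fun k hk =>
      strictConvexOn_log_div_const (hf k hk) (fun x hx => (hpos k hk x hx).ne') (hw k hk).ne'
  refine (strictMonoOn_logDeriv hlog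
    (fun x hx => (add_pos_of_pos_of_nonneg (hsum_pos x hx) hC).ne')
    fun x hx => (DifferentiableAt.fun_sum (hterm_diff x hx)).add_const C).congr fun x hx => ?_
  rw [logDeriv_apply, deriv_add_const, deriv_fun_sum (hterm_diff x hx)]
  simp only [deriv_div_const]

section Afun

variable {lam : ℝ → ℝ} {xstar : ℝ} {s : ℕ → ℝ} {k m : ℕ}

theorem Afun_pos {a : ℝ} (hpos : ∀ i ∈ Finset.Icc k m, 0 < lam (xstar - s i - a)) :
    0 < Afun lam xstar s k m a :=
  inv_pos.2 (Finset.prod_pos hpos)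

theorem differentiableAt_Afun {a : ℝ}
    (hdiff : ∀ i ∈ Finset.Icc k m, DifferentiableAt ℝ lam (xstar - s i - a))
    (hne : ∀ i ∈ Finset.Icc k m, lam (xstar - s i - a) ≠ 0) :
    DifferentiableAt ℝ (Afun lam xstar s k m) a :=
  (DifferentiableAt.fun_finsetProd fun i hi =>
    (hdiff i hi).comp a (differentiableAt_id.const_sub (xstar - s i))).fun_inv
    (Finset.prod_ne_zero_iff.2 hne)

theorem log_Afun {a : ℝ} (hne : ∀ i ∈ Finset.Icc k m, lam (xstar - s i - a) ≠ 0) :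
    Real.log (Afun lam xstar s k m a) =
      -∑ i ∈ Finset.Icc k m, Real.log (lam (xstar - s i - a)) := by
  rw [Afun, Real.log_inv, Real.log_prod hne]

theorem strictConvexOn_log_Afun {S T : Set ℝ} (hS : Convex ℝ S) (hkm : k ≤ m)
    (hmaps : ∀ i ∈ Finset.Icc k m, MapsTo (fun a => xstar - s i - a) S T)
    (hne : ∀ x ∈ T, lam x ≠ 0) (hlog : StrictConcaveOn ℝ T fun x => Real.log (lam x)) :
    StrictConvexOn ℝ S fun a => Real.log (Afun lam xstar s k m a) := by
  have hterm : ∀ i ∈ Finset.Icc k m,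
      StrictConcaveOn ℝ S fun a => Real.log (lam (xstar - s i - a)) := fun i hi =>
    (strictConcaveOn_comp_affineMap hlog (AffineEquiv.constVSub ℝ (xstar - s i)).toAffineMap
      (AffineEquiv.constVSub ℝ (xstar - s i)).injective).subset (hmaps i hi) hS
  exact (strictConcaveOn_sum (Finset.nonempty_Icc.2 hkm) hterm).neg.congr fun a ha =>
    (log_Afun fun i hi => hne _ (hmaps i hi ha)).symm

end Afun

theorem stmt_10_general {lam : ℝ → ℝ} {xstar : ℝ} {s : ℕ → ℝ} {m : ℕ} {w : ℕ → ℝ} {C : ℝ}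
    (hlam_pos : ∀ x ∈ Ici (0 : ℝ), 0 < lam x)
    (hlam_log : StrictConcaveOn ℝ (Ici 0) fun x => Real.log (lam x))
    (hlam_diff : ∀ x ∈ Ici (0 : ℝ), DifferentiableAt ℝ lam x)
    (hm : 1 ≤ m) (hs : ∀ i ∈ Finset.Icc 1 m, s i ≤ s m)
    (hw : ∀ k ∈ Finset.Icc 1 m, 0 < w k) (hC : 0 ≤ C) :
    StrictMonoOn
      (fun a => (∑ k ∈ Finset.Icc 1 m, deriv (Afun lam xstar s k m) a / w k) /
        ((∑ k ∈ Finset.Icc 1 m, Afun lam xstar s k m a / w k) + C))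
      (Iic (xstar - s m)) := by
  have hmaps : ∀ k ∈ Finset.Icc 1 m, ∀ i ∈ Finset.Icc k m,
      MapsTo (fun a => xstar - s i - a) (Iic (xstar - s m)) (Ici 0) := by
    intro k hk i hi a ha
    have hsi := hs i (Finset.Icc_subset_Icc_left (Finset.mem_Icc.1 hk).1 hi)
    rw [mem_Iic] at ha
    rw [mem_Ici]
    linarith
  refine strictMonoOn_sum_deriv_div_sum_add_const (Finset.nonempty_Icc.2 hm) hw hC ?_ ?_ ?_
  · exact fun k hk a ha => Afun_pos fun i hi => hlam_pos _ (hmaps k hk i hi ha)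
  · exact fun k hk a ha => differentiableAt_Afun (fun i hi => hlam_diff _ (hmaps k hk i hi ha))
      fun i hi => (hlam_pos _ (hmaps k hk i hi ha)).ne'
  · exact fun k hk => strictConvexOn_log_Afun (convex_Iic _) (Finset.mem_Icc.1 hk).2 (hmaps k hk)
      (fun x hx => (hlam_pos x hx).ne') hlam_log

/-- **Lemma 4 (monotonicity of the auxiliary ratio `h`).**
Fix `m ∈ {1,…,N−1}` and a decay rate `μ > 0`.  The function
`h(a) = (Σ_{k=1}^m A'_{k,m}(a)/μ^{k−1}) /
        (Σ_{k=1}^m A_{k,m}(a)/μ^{k−1} + Σ_{k=m+1}^N B_{k,m}/μ^{k−1})`,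
with `A_{k,m}(a) = 1/∏_{i=k}^m λ(x⋆−s_i−a)` and `B_{k,m} = λ(0)^{k−m−1}`, is increasing
in `a` on the interval `(x⋆ − s_{m+1}, x⋆ − s_m]`. -/
theorem stmt_10
    (p : ℝ → ℝ) (γ : ℝ)
    (hp_nonneg : ∀ x, 0 ≤ p x)
    (hp_mono : Monotone p)
    (hp_concave : ConcaveOn ℝ univ p)
    (hp_cont : Continuous p)
    (hp_diff : Differentiable ℝ p)
    (hp_diff2 : Differentiable ℝ (deriv p))
    (hγ : 0 < γ)
    (hlimsup : Filter.limsup (fun x => p x / x) atTop < γ)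
    (xstar : ℝ)
    (hxstar : IsGreatest {x : ℝ | 0 ≤ x ∧ ∀ y, 0 ≤ y → p y - γ * y ≤ p x - γ * x} xstar)
    (N : ℕ) (hN : 2 ≤ N)
    (s : ℕ → ℝ)
    (hs_mono : ∀ i j, 1 ≤ i → i ≤ j → j ≤ N → s i ≤ s j)
    (lam : ℝ → ℝ)
    (hlam_pos : ∀ x, 0 ≤ x → 0 < lam x)
    (hlam_mono : StrictMonoOn lam (Ici 0))
    (hlam_concave : ConcaveOn ℝ (Ici 0) lam)
    (hlam_diff : Differentiable ℝ lam)
    (μ : ℝ) (hμ : 0 < μ)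
    (m : ℕ) (hm1 : 1 ≤ m) (hm2 : m ≤ N - 1) :
    StrictMonoOn
      (fun a =>
        (∑ k ∈ Finset.Icc 1 m, deriv (Afun lam xstar s k m) a / μ ^ (k - 1)) /
          ((∑ k ∈ Finset.Icc 1 m, Afun lam xstar s k m a / μ ^ (k - 1)) +
            ∑ k ∈ Finset.Icc (m + 1) N, lam 0 ^ (k - m - 1) / μ ^ (k - 1)))
      (Ioc (xstar - s (m + 1)) (xstar - s m)) := by
  have hs (i) (hi : i ∈ Finset.Icc 1 m) : s i ≤ s m :=
    hs_mono i m (Finset.mem_Icc.1 hi).1 (Finset.mem_Icc.1 hi).2 (hm2.trans (Nat.sub_le N 1))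
  have hC : 0 ≤ ∑ k ∈ Finset.Icc (m + 1) N, lam 0 ^ (k - m - 1) / μ ^ (k - 1) :=
    Finset.sum_nonneg fun k _ =>
      div_nonneg (pow_nonneg (hlam_pos 0 le_rfl).le _) (pow_nonneg hμ.le _)
  exact (stmt_10_general hlam_pos
    (strictConcaveOn_log_of_concaveOn_of_injOn hlam_concave hlam_mono.injOn hlam_pos)
    (fun x _ => hlam_diff x) hm1 hs (fun k _ => pow_pos hμ (k - 1)) hC).mono Ioc_subset_Iic_self
end

section
/- Consider the piecewise-linear production function p(x) = min(1, βx) and cost c(e) = γe with β > γ. Then for every skill s ≥ 0, proficiency ā ≥ 0 and reliability q ∈ [0,1], the utility-maximizing effort is e⋆(s,ā,q) = (1/β − s)⁺ if q ≤ (β−γ)/β and e⋆(s,ā,q) = (1/β − s − ā)⁺ otherwise; the corresponding productivity is p⋆(s,ā,q) = 1 if q ≤ (β−γ)/β and p⋆(s,ā,q) = q + (1−q)·max(min(1, βs), 1 − βā) otherwise. -/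
open Set Filter

/-!
The expected utility is concave and piecewise linear in the effort `e`, with slope `β - γ > 0` up to
`1/β - s - a`, then `(1 - q)β - γ` up to `1/β - s`, then `-γ < 0`. The middle slope is nonnegative
exactly when `q ≤ (β - γ)/β`, so this inequality decides at which of the two kinks the utility
switches from nondecreasing to strictly decreasing; the largest maximizer is that kink, truncated
at `0`.
-/

lemma isGreatest_maximizers_Ici_of_monotoneOn_strictAntiOn {α β : Type*} [LinearOrder α]
    [Preorder β] {f : α → β} {k : α} (hmono : MonotoneOn f (Iic k))
    (hanti : StrictAntiOn f (Ici k)) (a : α) :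
    IsGreatest {x | x ∈ Ici a ∧ IsMaxOn f (Ici a) x} (max k a) := by
  have hlt : ∀ x, max k a < x → f x < f (max k a) := fun x hx ↦
    hanti (le_max_left k a) ((le_max_left k a).trans hx.le) hx
  have hle : ∀ x ∈ Ici a, x ≤ max k a → f x ≤ f (max k a) := by
    intro x hax hx
    rcases le_total k a with hka | hak
    · rw [max_eq_right hka] at hx ⊢
      rw [le_antisymm hx hax]
    · rw [max_eq_left hak] at hx ⊢
      exact hmono hx le_rfl hx
  refine ⟨⟨le_max_right k a, fun x hx ↦ ?_⟩, fun x ⟨_, hmax⟩ ↦ ?_⟩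
  · exact (le_or_gt x (max k a)).elim (hle x hx) fun h ↦ (hlt x h).le
  · exact not_lt.1 fun h ↦ (hlt x h).not_ge (hmax (le_max_right k a))

section LinearOrderedField

variable {K : Type*} [Field K] [LinearOrder K]

/-- The piecewise-linear production function `p(x) = min(1, βx)`. -/
def production (β x : K) : K :=
  min 1 (β * x)

/-- Expected production at skill `s` and effort `e`, when assistance of proficiency `a` is
available with probability `q` and absent otherwise. -/
def productivity (β s a q e : K) : K :=
  q * production β (s + e + a) + (1 - q) * production β (s + e)

/-- Productivity net of the effort cost `c(e) = γe`. -/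
def utility (β γ s a q e : K) : K :=
  productivity β s a q e - γ * e

/-- `e` is the effort `e⋆(s, a, q)`: the largest maximizer of the utility over nonnegative
efforts. -/
def IsOptimalEffort (β γ s a q e : K) : Prop :=
  IsGreatest {x | x ∈ Ici 0 ∧ IsMaxOn (utility β γ s a q) (Ici 0) x} e

variable [IsStrictOrderedRing K] {β γ s a q : K}

lemma production_monotone (hβ : 0 ≤ β) : Monotone (production β) := fun _ _ h ↦
  min_le_min_left 1 (mul_le_mul_of_nonneg_left h hβ)

lemma production_eq_one {x : K} (hβ : 0 < β) (hx : 1 / β ≤ x) : production β x = 1 :=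
  min_eq_left ((div_le_iff₀' hβ).1 hx)

lemma production_eq_mul {x : K} (hβ : 0 < β) (hx : x ≤ 1 / β) : production β x = β * x :=
  min_eq_right ((le_div_iff₀' hβ).1 hx)

lemma production_sub_le {x y : K} (hβ : 0 ≤ β) (hxy : x ≤ y) :
    production β y - production β x ≤ β * (y - x) := by
  have hstep : 0 ≤ β * (y - x) := mul_nonneg hβ (sub_nonneg.2 hxy)
  rw [sub_le_iff_le_add', production, production, ← min_add_add_right]
  exact le_min ((min_le_left _ _).trans (by linarith)) ((min_le_right _ _).trans_eq (by ring))

lemma productivity_eq_one {e : K} (hβ : 0 < β) (ha : 0 ≤ a) (he : 1 / β - s ≤ e) :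
    productivity β s a q e = 1 := by
  rw [productivity, production_eq_one hβ (by linarith), production_eq_one hβ (by linarith)]
  ring

lemma productivity_eq_of_le {e : K} (hβ : 0 < β) (he : 1 / β - s - a ≤ e) :
    productivity β s a q e = q + (1 - q) * production β (s + e) := by
  rw [productivity, production_eq_one hβ (by linarith), mul_one]

lemma monotoneOn_utility_Iic_sub (hβ : 0 < β) (hq : 0 ≤ q) (hγ : γ ≤ (1 - q) * β) :
    MonotoneOn (utility β γ s a q) (Iic (1 / β - s)) := by
  intro x (hx : x ≤ 1 / β - s) y (hy : y ≤ 1 / β - s) hxy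
  have hassisted : q * production β (s + x + a) ≤ q * production β (s + y + a) :=
    mul_le_mul_of_nonneg_left (production_monotone hβ.le (by linarith)) hq
  have hslope : 0 ≤ ((1 - q) * β - γ) * (y - x) :=
    mul_nonneg (sub_nonneg.2 hγ) (sub_nonneg.2 hxy)
  rw [utility, utility, productivity, productivity, production_eq_mul hβ (x := s + x) (by linarith),
    production_eq_mul hβ (x := s + y) (by linarith)]
  linarith

lemma strictAntiOn_utility_Ici_sub (hβ : 0 < β) (hγ : 0 < γ) (ha : 0 ≤ a) :
    StrictAntiOn (utility β γ s a q) (Ici (1 / β - s)) := by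
  intro x hx y hy hxy
  rw [utility, utility, productivity_eq_one hβ ha hx, productivity_eq_one hβ ha hy]
  exact sub_lt_sub_left (mul_lt_mul_of_pos_left hxy hγ) 1

lemma monotoneOn_utility_Iic_sub_sub (hβ : 0 < β) (hγ : γ ≤ β) (ha : 0 ≤ a) :
    MonotoneOn (utility β γ s a q) (Iic (1 / β - s - a)) := by
  have utility_eq : ∀ x ≤ 1 / β - s - a,
      utility β γ s a q x = β * (s + q * a) + (β - γ) * x := by
    intro x hx
    rw [utility, productivity, production_eq_mul hβ (by linarith),
      production_eq_mul hβ (by linarith)]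
    ring
  intro x hx y hy hxy
  rw [utility_eq x hx, utility_eq y hy]
  exact add_le_add_right (mul_le_mul_of_nonneg_left hxy (sub_nonneg.2 hγ)) _

lemma strictAntiOn_utility_Ici_sub_sub (hβ : 0 < β) (hq : q ≤ 1) (hγ : (1 - q) * β < γ) :
    StrictAntiOn (utility β γ s a q) (Ici (1 / β - s - a)) := by
  intro x hx y hy hxy
  have hunassisted : (1 - q) * (production β (s + y) - production β (s + x)) ≤
      (1 - q) * (β * (s + y - (s + x))) :=
    mul_le_mul_of_nonneg_left (production_sub_le hβ.le (by linarith)) (sub_nonneg.2 hq)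
  have hslope : ((1 - q) * β - γ) * (y - x) < 0 :=
    mul_neg_of_neg_of_pos (sub_neg.2 hγ) (sub_pos.2 hxy)
  rw [utility, utility, productivity_eq_of_le hβ hx, productivity_eq_of_le hβ hy]
  linarith

lemma isOptimalEffort_max_sub (hβ : 0 < β) (hγ : 0 < γ) (ha : 0 ≤ a) (hq : 0 ≤ q)
    (hslope : γ ≤ (1 - q) * β) : IsOptimalEffort β γ s a q (max (1 / β - s) 0) :=
  isGreatest_maximizers_Ici_of_monotoneOn_strictAntiOn
    (monotoneOn_utility_Iic_sub hβ hq hslope) (strictAntiOn_utility_Ici_sub hβ hγ ha) 0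

lemma isOptimalEffort_max_sub_sub (hβ : 0 < β) (hγβ : γ ≤ β) (ha : 0 ≤ a) (hq : q ≤ 1)
    (hslope : (1 - q) * β < γ) : IsOptimalEffort β γ s a q (max (1 / β - s - a) 0) :=
  isGreatest_maximizers_Ici_of_monotoneOn_strictAntiOn
    (monotoneOn_utility_Iic_sub_sub hβ hγβ ha) (strictAntiOn_utility_Ici_sub_sub hβ hq hslope) 0

lemma productivity_max_sub_sub (hβ : 0 < β) (ha : 0 ≤ a) :
    productivity β s a q (max (1 / β - s - a) 0) =
      q + (1 - q) * max (production β s) (1 - β * a) := by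
  have hunassisted : production β (1 / β - a) = 1 - β * a := by
    rw [production_eq_mul hβ (sub_le_self _ ha), mul_sub, mul_one_div_cancel hβ.ne']
  have htotal : s + max (1 / β - s - a) 0 = max s (1 / β - a) := by
    rw [← max_add_add_left, max_comm]
    congr 1 <;> ring
  rw [productivity_eq_of_le hβ (le_max_left _ _), htotal, (production_monotone hβ.le).map_max,
    hunassisted]

lemma le_sub_div_iff_le_one_sub_mul (hβ : 0 < β) : q ≤ (β - γ) / β ↔ γ ≤ (1 - q) * β := by
  rw [le_div_iff₀ hβ, sub_mul, one_mul, le_sub_comm]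

theorem stmt_14_general {e : K} (hγ : 0 < γ) (hγβ : γ < β) (ha : 0 ≤ a) (hq₀ : 0 ≤ q)
    (hq₁ : q ≤ 1) (he : IsOptimalEffort β γ s a q e) :
    (e = if q ≤ (β - γ) / β then max (1 / β - s) 0 else max (1 / β - s - a) 0) ∧
      productivity β s a q e =
        if q ≤ (β - γ) / β then 1
        else q + (1 - q) * max (production β s) (1 - β * a) := by
  have hβ : 0 < β := hγ.trans hγβ
  split_ifs with hq
  · rw [le_sub_div_iff_le_one_sub_mul hβ] at hq
    obtain rfl := he.unique (isOptimalEffort_max_sub hβ hγ ha hq₀ hq)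
    exact ⟨rfl, productivity_eq_one hβ ha (le_max_left _ _)⟩
  · rw [le_sub_div_iff_le_one_sub_mul hβ, not_le] at hq
    obtain rfl := he.unique (isOptimalEffort_max_sub_sub hβ hγβ.le ha hq₁ hq)
    exact ⟨rfl, productivity_max_sub_sub hβ ha⟩

end LinearOrderedField

/-- **Lemma 6 (piecewise-linear production under AI unreliability).**
For `p(x) = min(1, βx)`, `c(e) = γe` with `β > γ > 0`: for every skill `s ≥ 0`,
proficiency `ā ≥ 0` and reliability `q ∈ [0,1]`, the (largest) utility-maximizing effort is
`(1/β − s)⁺` if `q ≤ (β−γ)/β` and `(1/β − s − ā)⁺` otherwise; the corresponding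
productivity is `1` if `q ≤ (β−γ)/β` and `q + (1−q)·max(min(1, βs), 1 − βā)` otherwise. -/
theorem stmt_14
    (β γ : ℝ) (hγ : 0 < γ) (hβγ : γ < β)
    (estar : ℝ → ℝ → ℝ → ℝ)
    (hestar : ∀ s abar q, 0 ≤ s → 0 ≤ abar → 0 ≤ q → q ≤ 1 →
      IsGreatest {e : ℝ | 0 ≤ e ∧ ∀ e', 0 ≤ e' →
        q * min 1 (β * (s + e' + abar)) + (1 - q) * min 1 (β * (s + e')) - γ * e' ≤
          q * min 1 (β * (s + e + abar)) + (1 - q) * min 1 (β * (s + e)) - γ * e}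
        (estar s abar q)) :
    ∀ s abar q, 0 ≤ s → 0 ≤ abar → 0 ≤ q → q ≤ 1 →
      (estar s abar q =
        if q ≤ (β - γ) / β then max (1 / β - s) 0 else max (1 / β - s - abar) 0) ∧
      (q * min 1 (β * (s + estar s abar q + abar)) +
          (1 - q) * min 1 (β * (s + estar s abar q)) =
        if q ≤ (β - γ) / β then 1
        else q + (1 - q) * max (min 1 (β * s)) (1 - β * abar)) :=
  fun s abar q hs ha hq₀ hq₁ ↦ stmt_14_general hγ hβγ ha hq₀ hq₁ (hestar s abar q hs ha hq₀ hq₁)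
end

section
/- Suppose λ is increasing. Fix ā and q; if the Bayesian expected effort e_b⋆(s,ā,q) is non-monotonic in s, then there exist a decay rate μ > 0 and a finite ordered skill set S such that the steady-state skill distribution π(μ,ā,q,S) is multimodal. -/
/-!
Consecutive steady-state weights satisfy `π_{k+1} / π_k = λ(e_b⋆(s_k)) / μ`, so the distribution
falls after level `k` if the promotion rate `λ(e_b⋆(s_k))` is below `μ` and rises if it is above.
Effort that is not weakly decreasing gives skills `a < b` with `λ(e_b⋆(a)) < λ(e_b⋆(b))`. For `μ`
strictly between these two rates and a skill set `(a, b, c)`, the distribution first falls and then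
rises, so both of its ends are peaks.
-/

open Set Filter

/-- Bayesian expected effort of a signal follower with verification ability `v`:
`e_b⋆(s,ā,q) = P(â=ā|s)·e⋆(s,ā,q₁(q,s)) + P(â=0|s)·e⋆(s,ā,q₀(q,s))`. -/
noncomputable def ebstar (v : ℝ → ℝ) (estar : ℝ → ℝ → ℝ → ℝ) (abar q s : ℝ) : ℝ :=
  (q * v s + (1 - q) * (1 - v s)) *
      estar s abar (q * v s / (q * v s + (1 - q) * (1 - v s))) +
    (q * (1 - v s) + (1 - q) * v s) *
      estar s abar (q * (1 - v s) / (q * (1 - v s) + (1 - q) * v s))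

/-- Unnormalized steady-state weight `∏_{i=1}^{k−1} λ(e_b⋆(s_i))/μ`. -/
noncomputable def piW (lam : ℝ → ℝ) (eb : ℝ → ℝ) (s : ℕ → ℝ) (μ : ℝ) (k : ℕ) : ℝ :=
  ∏ i ∈ Finset.Icc 1 (k - 1), lam (eb (s i)) / μ

/-- Steady-state probability `π_k = piW k / Σ_{j=1}^N piW j`. -/
noncomputable def piDist (lam : ℝ → ℝ) (eb : ℝ → ℝ) (s : ℕ → ℝ) (N : ℕ) (μ : ℝ)
    (k : ℕ) : ℝ :=
  piW lam eb s μ k / ∑ j ∈ Finset.Icc 1 N, piW lam eb s μ j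

/-- `k` is a peak (strict local maximum) of the finite sequence `w 1, …, w N`. -/
def IsPeak (w : ℕ → ℝ) (N k : ℕ) : Prop :=
  1 ≤ k ∧ k ≤ N ∧ (k = 1 ∨ w (k - 1) < w k) ∧ (k = N ∨ w (k + 1) < w k)

/-- A finite sequence is multimodal if it has at least two peaks. -/
def Multimodal (w : ℕ → ℝ) (N : ℕ) : Prop :=
  ∃ k₁ k₂, IsPeak w N k₁ ∧ IsPeak w N k₂ ∧ k₁ ≠ k₂

/-- A finite ordered skill set `s_1 ≤ … ≤ s_N` of nonnegative skills. -/
def OrderedSkills (s : ℕ → ℝ) (N : ℕ) : Prop :=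
  1 ≤ N ∧ (∀ i, 1 ≤ i → i ≤ N → 0 ≤ s i) ∧ ∀ i, 1 ≤ i → i < N → s i ≤ s (i + 1)

section SteadyState

variable {lam eb : ℝ → ℝ} {s : ℕ → ℝ} {μ : ℝ} {N k : ℕ}

lemma piW_succ (hk : 1 ≤ k) :
    piW lam eb s μ (k + 1) = piW lam eb s μ k * (lam (eb (s k)) / μ) := by
  obtain ⟨m, rfl⟩ := Nat.exists_eq_add_of_le' hk
  exact Finset.prod_Icc_succ_top (Nat.le_add_left 1 m) _

lemma piW_pos (hμ : 0 < μ) (hrate : ∀ i, 1 ≤ i → i < k → 0 < lam (eb (s i))) :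
    0 < piW lam eb s μ k := by
  refine Finset.prod_pos fun i hi => ?_
  obtain ⟨hi₁, hik⟩ := Finset.mem_Icc.1 hi
  exact div_pos (hrate i hi₁ (by omega)) hμ

lemma sum_piW_pos (hN : 1 ≤ N) (hμ : 0 < μ)
    (hrate : ∀ i, 1 ≤ i → i < N → 0 < lam (eb (s i))) :
    0 < ∑ j ∈ Finset.Icc 1 N, piW lam eb s μ j :=
  Finset.sum_pos
    (fun _ hj => piW_pos hμ fun i hi hij => hrate i hi (hij.trans_le (Finset.mem_Icc.1 hj).2))
    (Finset.nonempty_Icc.2 hN)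

lemma piDist_succ_lt_iff (hμ : 0 < μ) (hrate : ∀ i, 1 ≤ i → i < N → 0 < lam (eb (s i)))
    (hk : 1 ≤ k) (hkN : k < N) :
    piDist lam eb s N μ (k + 1) < piDist lam eb s N μ k ↔ lam (eb (s k)) < μ := by
  have hweight : 0 < piW lam eb s μ k := piW_pos hμ fun i hi hik => hrate i hi (hik.trans hkN)
  rw [piDist, piDist, div_lt_div_iff_of_pos_right (sum_piW_pos (hk.trans hkN.le) hμ hrate),
    piW_succ hk, mul_lt_iff_lt_one_right hweight, div_lt_one hμ]

lemma piDist_lt_succ_iff (hμ : 0 < μ) (hrate : ∀ i, 1 ≤ i → i < N → 0 < lam (eb (s i)))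
    (hk : 1 ≤ k) (hkN : k < N) :
    piDist lam eb s N μ k < piDist lam eb s N μ (k + 1) ↔ μ < lam (eb (s k)) := by
  have hweight : 0 < piW lam eb s μ k := piW_pos hμ fun i hi hik => hrate i hi (hik.trans hkN)
  rw [piDist, piDist, div_lt_div_iff_of_pos_right (sum_piW_pos (hk.trans hkN.le) hμ hrate),
    piW_succ hk, lt_mul_iff_one_lt_right hweight, one_lt_div hμ]

lemma multimodal_piDist_of_lt_of_lt (hN : 1 ≤ N)
    (hrate : ∀ i, 1 ≤ i → i < N + 1 → 0 < lam (eb (s i)))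
    (hfirst : lam (eb (s 1)) < μ) (hlast : μ < lam (eb (s N))) :
    Multimodal (piDist lam eb s (N + 1) μ) (N + 1) := by
  have hμ : 0 < μ := (hrate 1 le_rfl (by omega)).trans hfirst
  have hfall := (piDist_succ_lt_iff hμ hrate le_rfl (by omega)).2 hfirst
  have hrise := (piDist_lt_succ_iff hμ hrate hN N.lt_succ_self).2 hlast
  exact ⟨1, N + 1, ⟨le_rfl, by omega, .inl rfl, .inr hfall⟩,
    ⟨by omega, le_rfl, .inr hrise, .inl rfl⟩, by omega⟩

end SteadyState

lemma orderedSkills_of_monotone {s : ℕ → ℝ} {N : ℕ} (hN : 1 ≤ N) (hs : Monotone s)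
    (hs₁ : 0 ≤ s 1) : OrderedSkills s N :=
  ⟨hN, fun _ hi _ => hs₁.trans (hs hi), fun i _ _ => hs i.le_succ⟩

theorem stmt_18_general {lam eb : ℝ → ℝ} (hrate : ∀ x, 0 ≤ x → 0 < lam (eb x))
    (hanti : ¬ AntitoneOn (lam ∘ eb) (Ici 0)) :
    ∃ μ, 0 < μ ∧ ∃ (N : ℕ) (s : ℕ → ℝ), OrderedSkills s N ∧
      Multimodal (piDist lam eb s N μ) N := by
  obtain ⟨a, ha, b, -, hab, hlt⟩ : ∃ a, 0 ≤ a ∧ ∃ b, 0 ≤ b ∧ a ≤ b ∧ lam (eb a) < lam (eb b) := by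
    simpa [AntitoneOn] using hanti
  obtain ⟨μ, haμ, hμb⟩ := exists_between hlt
  -- The weights ignore the third skill; an arithmetic progression makes it differ from `b`.
  let s : ℕ → ℝ := fun i => a + (i - 1 : ℕ) * (b - a)
  have hs : Monotone s := fun i j hij => by
    have : 0 ≤ b - a := sub_nonneg.2 hab
    dsimp only [s]
    gcongr
  have hs₁ : s 1 = a := by simp [s]
  have hs₂ : s 2 = b := by simp [s]
  have hskills : OrderedSkills s 3 := orderedSkills_of_monotone (by norm_num) hs (hs₁ ▸ ha)
  exact ⟨μ, (hrate a ha).trans haμ, 3, s, hskills,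
    multimodal_piDist_of_lt_of_lt one_le_two
      (fun i hi hi₃ => hrate _ (hskills.2.1 i hi hi₃.le)) (hs₁.symm ▸ haμ) (hs₂.symm ▸ hμb)⟩

/-- A signal of probability zero gives the junk posterior `0 / 0 = 0`, which still lies in
`[0, 1]`. -/
lemma ebstar_nonneg {v : ℝ → ℝ} {estar : ℝ → ℝ → ℝ → ℝ} {abar q s : ℝ}
    (hq : q ∈ Icc 0 1) (hv : v s ∈ Icc 0 1)
    (hestar : ∀ q' ∈ Icc (0 : ℝ) 1, 0 ≤ estar s abar q') :
    0 ≤ ebstar v estar abar q s := by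
  have hterm {x y : ℝ} (hx : 0 ≤ x) (hy : 0 ≤ y) : 0 ≤ (x + y) * estar s abar (x / (x + y)) :=
    mul_nonneg (add_nonneg hx hy) <| hestar _
      ⟨div_nonneg hx (add_nonneg hx hy),
        div_le_one_of_le₀ (le_add_of_nonneg_right hy) (add_nonneg hx hy)⟩
  have hq' : 0 ≤ 1 - q := sub_nonneg.2 hq.2
  have hv' : 0 ≤ 1 - v s := sub_nonneg.2 hv.2
  exact add_nonneg (hterm (mul_nonneg hq.1 hv.1) (mul_nonneg hq' hv'))
    (hterm (mul_nonneg hq.1 hv') (mul_nonneg hq' hv.1))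

lemma not_antitoneOn_comp_of_strictMonoOn {α β γ : Type*} [Preorder α] [LinearOrder β]
    [Preorder γ] {f : β → γ} {g : α → β} {s : Set α} {t : Set β} (hf : StrictMonoOn f t)
    (hg : MapsTo g s t) (hanti : ¬ AntitoneOn g s) : ¬ AntitoneOn (f ∘ g) s :=
  fun h => hanti fun _ ha _ hb hab => (hf.le_iff_le (hg hb) (hg ha)).1 (h ha hb hab)

/-- **Lemma 9 (non-monotonic Bayesian effort generates a multimodal skill distribution).**
Suppose `λ` is increasing.  Fix `ā` and `q`; if the Bayesian expected effort
`s ↦ e_b⋆(s,ā,q)` is non-monotonic in `s` on `[0,∞)` (neither weakly increasing nor weakly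
decreasing), then there exist a decay rate `μ > 0` and a finite ordered skill set `S` such
that the steady-state skill distribution is multimodal. -/
theorem stmt_18
    (β γ : ℝ) (hγ : 0 < γ) (hβγ : γ < β)
    (lam : ℝ → ℝ)
    (hlam_pos : ∀ x, 0 ≤ x → 0 < lam x)
    (hlam_mono : StrictMonoOn lam (Ici 0))
    (v : ℝ → ℝ)
    (hv_range : ∀ x, 0 ≤ x → 1 / 2 ≤ v x ∧ v x ≤ 1)
    (hv_mono : MonotoneOn v (Ici 0))
    (hv_concave : ConcaveOn ℝ (Ici 0) v)
    (q : ℝ) (hq0 : 0 ≤ q) (hq1 : q ≤ 1)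
    (abar : ℝ) (habar : 0 ≤ abar)
    (estar : ℝ → ℝ → ℝ → ℝ)
    (hestar : ∀ s ab q', 0 ≤ s → 0 ≤ ab → 0 ≤ q' → q' ≤ 1 →
      IsGreatest {e : ℝ | 0 ≤ e ∧ ∀ e', 0 ≤ e' →
        q' * min 1 (β * (s + e' + ab)) + (1 - q') * min 1 (β * (s + e')) - γ * e' ≤
          q' * min 1 (β * (s + e + ab)) + (1 - q') * min 1 (β * (s + e)) - γ * e}
        (estar s ab q'))
    (heb_nonmono : ¬ MonotoneOn (ebstar v estar abar q) (Ici 0) ∧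
      ¬ AntitoneOn (ebstar v estar abar q) (Ici 0)) :
    ∃ μ, 0 < μ ∧ ∃ (N : ℕ) (s : ℕ → ℝ), OrderedSkills s N ∧
      Multimodal (piDist lam (ebstar v estar abar q) s N μ) N := by
  have hnonneg : MapsTo (ebstar v estar abar q) (Ici 0) (Ici 0) := fun x hx =>
    ebstar_nonneg ⟨hq0, hq1⟩ ⟨one_half_pos.le.trans (hv_range x hx).1, (hv_range x hx).2⟩
      fun q' hq' => (hestar x abar q' hx habar hq'.1 hq'.2).1.1
  exact stmt_18_general (fun x hx => hlam_pos _ (hnonneg hx))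
    (not_antitoneOn_comp_of_strictMonoOn hlam_mono hnonneg heb_nonmono.2)
end
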